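/- arXiv:1211.5475 — 10 statements merged into one kernel-verified Lean document; each statement's English description precedes it below -/
import Mathlib

section
/- The map from K^n to the space of F-linear endomorphisms of K which sends a coefficient vector (a_0, …, a_{n-1}) ∈ K^n to the map x ↦ Σ_{i=0}^{n-1} a_i x^{q^i} is a bijection; in particular, every F-linear endomorphism of K is induced by a unique linearized polynomial Σ_{i=0}^{n-1} a_i x^{q^i} with coefficients in K. -/
open scoped BigOperators

/-!
The `n` powers `1, φ, …, φ ^ (n - 1)` of the Frobenius `φ : x ↦ x ^ q` are pairwise distinct, because
`φ` has order `n = [K : F]` in the monoid of `F`-algebra endomorphisms of `K`. By Dedekind's theorem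
on the independence of characters they are therefore linearly independent over `K`, which is the
uniqueness of the coefficients. The `K`-dimension of `Module.End F K` (with `K` acting on values) is
also `n`, so these powers form a `K`-basis, which gives existence.
-/

/-- Dedekind independence, applied to the powers of Frobenius below the degree of the extension. -/
theorem linearIndependent_frobenius_powers (F K : Type*) [Field F] [Fintype F] [Field K]
    [Algebra F K] [FiniteDimensional F K] :
    LinearIndependent K (fun i : Fin (Module.finrank F K) =>
      ((FiniteField.frobeniusAlgHom F K) ^ (i : ℕ)).toLinearMap) := by
  have : Finite K := Module.finite_of_finite F
  exact (linearIndependent_toLinearMap F K K).comp _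
    (FiniteField.bijective_frobeniusAlgHom_pow F K).1

/-- A `K`-combination of powers of Frobenius is evaluated as a linearized polynomial. -/
theorem sum_smul_frobenius_apply (F K : Type*) [Field F] [Fintype F] [Field K]
    [Algebra F K] {n : ℕ} (a : Fin n → K) (x : K) :
    (∑ i, a i • ((FiniteField.frobeniusAlgHom F K) ^ (i : ℕ)).toLinearMap) x =
      ∑ i, a i * x ^ Fintype.card F ^ (i : ℕ) := by
  simp [LinearMap.sum_apply, AlgHom.coe_pow, FiniteField.coe_frobeniusAlgHom, pow_iterate]

/-- Every `F`-linear endomorphism of `K` is induced by a unique linearized polynomial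
`x ↦ ∑ aᵢ x^(qⁱ)` with coefficients in `K`: the map `a ↦ (x ↦ ∑ aᵢ x^(qⁱ))` is a bijection
from `K^n` onto the `F`-linear endomorphisms of `K`. -/
theorem stmt0 (F K : Type*) [Field F] [Fintype F] [Field K] [Algebra F K]
    [FiniteDimensional F K] (q n : ℕ) (hq : q = Fintype.card F)
    (hn : n = Module.finrank F K) :
    (∀ f : K →ₗ[F] K, ∃ a : Fin n → K, ∀ x : K, f x = ∑ i : Fin n, a i * x ^ q ^ (i : ℕ)) ∧
    (∀ a b : Fin n → K,
      (∀ x : K, ∑ i : Fin n, a i * x ^ q ^ (i : ℕ) = ∑ i : Fin n, b i * x ^ q ^ (i : ℕ)) →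
      a = b) := by
  subst hq hn
  have hli := linearIndependent_frobenius_powers F K
  constructor
  · intro f
    have htop := hli.span_eq_top_of_card_eq_finrank' (by
      rw [Fintype.card_fin, Module.finrank_linearMap_self])
    have hf := htop ▸ Submodule.mem_top (x := f)
    obtain ⟨a, ha⟩ := (Submodule.mem_span_range_iff_exists_fun K).1 hf
    exact ⟨a, fun x => by rw [← ha, sum_smul_frobenius_apply]⟩
  · intro a b h
    refine hli.fintypeLinearCombination_injective (LinearMap.ext fun x => ?_)
    simp only [Fintype.linearCombination_apply]
    rw [sum_smul_frobenius_apply, sum_smul_frobenius_apply, h]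
end

section
/- For a linearized polynomial L with coefficient vector a ∈ K^n, the rank of the Dickson matrix D(a) as a matrix over K equals the rank of L, i.e. rank D(a) = dim_F L(K). -/
/-!
Fix an `F`-basis `β` of `K` and let `M` be the Moore matrix `M j k = (β k) ^ q ^ j`. Since the
Frobenius `x ↦ x ^ q` is additive of order `n` on `K`, the product `D(a) * M` has entries
`(L (β k)) ^ q ^ i`, and expanding `L (β k)` in the basis `β` gives `D(a) * M = M * A`, where `A`
is the matrix of `L` in the basis `β`, viewed over `K`. The matrix `M` is invertible because
distinct powers of the Frobenius are linearly independent over `K` (Dedekind). Hence `D(a)` is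
equivalent to `A`, and the rank of `A` is unchanged when passing from `F` to `K`.
-/

open scoped BigOperators

/-- The Dickson matrix associated to a coefficient vector `a ∈ K^n`:
its `(i,j)`-entry is `(a_{(j-i) mod n})^(q^i)`. -/
def dicksonMatrix {K : Type*} [Field K] (q : ℕ) {n : ℕ} (a : Fin n → K) :
    Matrix (Fin n) (Fin n) K :=
  Matrix.of fun i j => a (j - i) ^ q ^ (i : ℕ)

theorem rank_fromBlocks_one_zero (k : Type*) [Field k] (r s : ℕ) :
    (Matrix.fromBlocks 1 0 0 0 : Matrix (Fin r ⊕ Fin s) (Fin r ⊕ Fin s) k).rank = r := by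
  classical
  rw [← Matrix.diagonal_one, ← Matrix.diagonal_zero, Matrix.fromBlocks_diagonal,
    Matrix.rank_diagonal, Fintype.card_subtype, Finset.card_filter, Fintype.sum_sum_type]
  simp

/-- The rank of a square matrix is invariant under field extension: the invertible matrices
bringing it to rank normal form remain invertible over the larger field. -/
theorem rank_map_algebraMap {F K m : Type*} [Field F] [Field K] [Algebra F K] [Fintype m]
    [DecidableEq m] (A : Matrix m m F) : (A.map (algebraMap F K)).rank = A.rank := by
  obtain ⟨V, U, e, hV, hU, h⟩ := A.exists_rank_normal_form
  have hV' : IsUnit (V.map (algebraMap F K)) := hV.map (algebraMap F K).mapMatrix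
  have hU' : IsUnit (U.map (algebraMap F K)) := hU.map (algebraMap F K).mapMatrix
  have h' : V.map (algebraMap F K) * A.map (algebraMap F K) * U.map (algebraMap F K)
      = (Matrix.fromBlocks 1 0 0 0).submatrix e e := by
    rw [← Matrix.map_mul, ← Matrix.map_mul, h, ← Matrix.submatrix_map, Matrix.fromBlocks_map]
    simp
  rw [← Matrix.rank_mul_eq_right_of_isUnit_det _ (A.map (algebraMap F K))
      ((Matrix.isUnit_iff_isUnit_det _).1 hV'),
    ← Matrix.rank_mul_eq_left_of_isUnit_det _ (V.map (algebraMap F K) * A.map (algebraMap F K))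
      ((Matrix.isUnit_iff_isUnit_det _).1 hU'), h', Matrix.rank_submatrix,
    rank_fromBlocks_one_zero]

theorem frobeniusAlgHom_pow_apply (F K : Type*) [Field F] [Fintype F] [Field K] [Algebra F K]
    (i : ℕ) (x : K) :
    (FiniteField.frobeniusAlgHom F K ^ i) x = x ^ Fintype.card F ^ i := by
  rw [AlgHom.coe_pow, FiniteField.coe_frobeniusAlgHom, pow_iterate]

/-- The Moore matrix of a family `β` in `K`, with `(j,k)`-entry `(β k) ^ q ^ j`; the entries are
written through the Frobenius, whose additivity is what matters. -/
noncomputable def mooreMatrix (F : Type*) {K : Type*} [Field F] [Fintype F] [Field K] [Algebra F K]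
    {n : ℕ} (β : Fin n → K) : Matrix (Fin n) (Fin n) K :=
  Matrix.of fun j k => (FiniteField.frobeniusAlgHom F K ^ (j : ℕ)) (β k)

/-- The Moore matrix of a basis is invertible: a linear relation between its rows is a
`K`-linear combination of powers of the Frobenius vanishing on a basis, so it is trivial by
Dedekind's independence of homomorphisms. -/
theorem isUnit_mooreMatrix {F K : Type*} [Field F] [Fintype F] [Field K] [Algebra F K]
    [FiniteDimensional F K] (β : Module.Basis (Fin (Module.finrank F K)) F K) :
    IsUnit (mooreMatrix F β) := by
  have : Finite K := Module.finite_of_finite F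
  rw [← Matrix.linearIndependent_rows_iff_isUnit, Fintype.linearIndependent_iff]
  intro c hc
  have hli := (linearIndependent_toLinearMap F K K).comp _
    (FiniteField.bijective_frobeniusAlgHom_pow F K).1
  rw [Fintype.linearIndependent_iff] at hli
  refine hli c (β.ext fun k => ?_)
  simpa [mooreMatrix] using congrFun hc k

theorem dicksonMatrix_mul_mooreMatrix {F K : Type*} [Field F] [Fintype F] [Field K] [Algebra F K]
    [FiniteDimensional F K] (β : Module.Basis (Fin (Module.finrank F K)) F K)
    (a : Fin (Module.finrank F K) → K) (f : K →ₗ[F] K)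
    (hf : ∀ x : K, f x = ∑ i, a i * x ^ Fintype.card F ^ (i : ℕ)) :
    dicksonMatrix (Fintype.card F) a * mooreMatrix F β
      = mooreMatrix F β * (LinearMap.toMatrix β β f).map (algebraMap F K) := by
  have : Finite K := Module.finite_of_finite F
  have : NeZero (Module.finrank F K) := ⟨Module.finrank_pos.ne'⟩
  ext i k
  -- Both sides equal `f (β k) ^ q ^ i`.
  trans (FiniteField.frobeniusAlgHom F K ^ (i : ℕ)) (f (β k))
  · rw [hf, map_sum, Matrix.mul_apply, ← Equiv.sum_comp (Equiv.addRight i)]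
    refine Finset.sum_congr rfl fun l _ => ?_
    -- The index `l + i` is reduced modulo `n`, the order of the Frobenius.
    have hmod : FiniteField.frobeniusAlgHom F K ^ ((l + i : Fin _) : ℕ)
        = FiniteField.frobeniusAlgHom F K ^ ((i : ℕ) + l) := by
      rw [Fin.val_add, add_comm (i : ℕ), ← pow_mod_orderOf _ ((l : ℕ) + i),
        FiniteField.orderOf_frobeniusAlgHom]
    simp only [dicksonMatrix, mooreMatrix, Matrix.of_apply, Equiv.coe_addRight,
      add_sub_cancel_right, map_mul, hmod]
    rw [pow_add, AlgHom.mul_apply, frobeniusAlgHom_pow_apply F K l,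
      frobeniusAlgHom_pow_apply F K i (a l)]
  · conv_lhs => rw [← β.sum_repr (f (β k)), map_sum]
    rw [Matrix.mul_apply]
    refine Finset.sum_congr rfl fun m _ => ?_
    simp only [mooreMatrix, Matrix.of_apply, Matrix.map_apply, LinearMap.toMatrix_apply,
      Algebra.smul_def, map_mul, AlgHom.commutes, mul_comm]

/-- The rank of the Dickson matrix `D(a)` (as a matrix over `K`) equals the rank of the
linearized polynomial `L` with coefficient vector `a`, i.e. `dim_F L(K)`. -/
theorem stmt3 (F K : Type*) [Field F] [Fintype F] [Field K] [Algebra F K]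
    [FiniteDimensional F K] (q n : ℕ) (hq : q = Fintype.card F)
    (hn : n = Module.finrank F K) (a : Fin n → K) (f : K →ₗ[F] K)
    (hf : ∀ x : K, f x = ∑ i : Fin n, a i * x ^ q ^ (i : ℕ)) :
    (dicksonMatrix q a).rank = Module.finrank F (LinearMap.range f) := by
  subst hq hn
  let β := Module.finBasis F K
  have hM := (Matrix.isUnit_iff_isUnit_det _).1 (isUnit_mooreMatrix β)
  rw [← Matrix.rank_mul_eq_left_of_isUnit_det _ _ hM, dicksonMatrix_mul_mooreMatrix β a f hf,
    Matrix.rank_mul_eq_right_of_isUnit_det _ _ hM, rank_map_algebraMap,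
    Matrix.rank_eq_finrank_range_toLin _ β β, Matrix.toLin_toMatrix]
end

section
/- For a linearized polynomial L with coefficient vector a ∈ K^n, the determinant of the Dickson matrix D(a) equals the image in K of the determinant of L regarded as an F-linear endomorphism of K; in particular, det D(a) lies in the subfield F. -/
/-!
Let `σ` be the `q`-power Frobenius of `K` over `F`, let `b` be an `F`-basis of `K`, and let `M` be
the Moore matrix `(σ ^ i) (b k)`. Applying `σ ^ i` to `L (b k)` in two ways, once through the
polynomial expression of `L` (where `σ ^ n = 1` makes the exponents cyclic) and once through the
matrix `A` of `L` in the basis `b`, gives `D(a) * M = M * A`. The Moore matrix is nonsingular,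
because a vector in its left kernel is a `K`-linear relation among the `n` distinct characters
`σ ^ i`, which are independent by Dedekind. Hence `det D(a) = det A`.
-/

open scoped BigOperators

/-- The Moore matrix of a basis is nonsingular, by Dedekind's independence of characters. -/
theorem moore_det_ne_zero (F K : Type*) [Field F] [Fintype F] [Field K] [Algebra F K]
    [FiniteDimensional F K]
    (b : Module.Basis (Fin (Module.finrank F K)) F K) :
    (Matrix.of fun i k : Fin (Module.finrank F K) =>
      b k ^ Fintype.card F ^ (i : ℕ)).det ≠ 0 := by
  have : Finite K := Module.finite_of_finite F
  intro h
  obtain ⟨v, hv, hv0⟩ := Matrix.exists_vecMul_eq_zero_iff.mpr h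
  apply hv
  let s : Fin (Module.finrank F K) → (K →ₐ[F] K) :=
    fun i => ((FiniteField.frobeniusAlgEquivOfAlgebraic F K ^ (i : ℕ) : K ≃ₐ[F] K) : K →ₐ[F] K)
  have hs : Function.Injective s := by
    intro i j hij
    apply (FiniteField.bijective_frobeniusAlgEquivOfAlgebraic_pow F K).1
    ext x
    exact DFunLike.congr_fun hij x
  have hsx : ∀ i x, s i x = x ^ Fintype.card F ^ (i : ℕ) := by
    intro i x
    simp [s, AlgEquiv.coe_pow, FiniteField.coe_frobeniusAlgEquivOfAlgebraic_iterate]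
  have hli := (linearIndependent_toLinearMap F K K).comp s hs
  have hsum : ∑ i, v i • (s i).toLinearMap = 0 := by
    apply b.ext
    intro k
    have := congrFun hv0 k
    simpa [Matrix.vecMul, dotProduct, hsx] using this
  funext i
  exact Fintype.linearIndependent_iff.mp hli v hsum i

/-- The Dickson matrix and the matrix of the linearized polynomial are intertwined by the Moore
matrix of the basis. -/
theorem dickson_mul_moore (F K : Type*) [Field F] [Fintype F] [Field K] [Algebra F K]
    [FiniteDimensional F K]
    (b : Module.Basis (Fin (Module.finrank F K)) F K)
    (a : Fin (Module.finrank F K) → K) (f : K →ₗ[F] K)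
    (hf : ∀ x : K, f x = ∑ i, a i * x ^ Fintype.card F ^ (i : ℕ)) :
    dicksonMatrix (Fintype.card F) a *
        (Matrix.of fun i k : Fin (Module.finrank F K) => b k ^ Fintype.card F ^ (i : ℕ)) =
      (Matrix.of fun i k : Fin (Module.finrank F K) => b k ^ Fintype.card F ^ (i : ℕ)) *
        (LinearMap.toMatrix b b f).map (algebraMap F K) := by
  have : Finite K := Module.finite_of_finite F
  have : Fintype K := Fintype.ofFinite K
  have : NeZero (Module.finrank F K) := ⟨Module.finrank_pos.ne'⟩
  have hK : ∀ x : K, x ^ Fintype.card F ^ Module.finrank F K = x := by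
    intro x
    rw [← Module.card_eq_pow_finrank, FiniteField.pow_card]
  ext i k
  let s : K ≃ₐ[F] K := FiniteField.frobeniusAlgEquivOfAlgebraic F K ^ (i : ℕ)
  have hsx : ∀ x, s x = x ^ Fintype.card F ^ (i : ℕ) := by
    intro x
    simp [s, AlgEquiv.coe_pow, FiniteField.coe_frobeniusAlgEquivOfAlgebraic_iterate]
  -- Both entries are `σ ^ i` applied to `f (b k)`.
  trans s (f (b k))
  · rw [hf, map_sum, Matrix.mul_apply, ← Equiv.sum_comp (Equiv.addRight i)]
    refine Finset.sum_congr rfl fun m _ => ?_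
    simp only [dicksonMatrix, Matrix.of_apply, Equiv.coe_addRight, add_sub_cancel_right, mul_pow,
      hsx]
    congr 1
    rw [← pow_mul, ← pow_add, Fin.val_add_eq_ite]
    split_ifs with h
    · conv_rhs => rw [← Nat.sub_add_cancel h, pow_add, pow_mul, hK]
    · rfl
  · have h := b.sum_repr (f (b k))
    rw [← h, map_sum, Matrix.mul_apply]
    refine Finset.sum_congr rfl fun l _ => ?_
    rw [map_smul, hsx, Algebra.smul_def, mul_comm]
    simp [LinearMap.toMatrix_apply]

/-- The determinant of the Dickson matrix `D(a)` equals the image in `K` of the determinant of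
the linearized polynomial `L` regarded as an `F`-linear endomorphism of `K`; in particular
`det D(a)` lies in the subfield `F`. -/
theorem stmt4 (F K : Type*) [Field F] [Fintype F] [Field K] [Algebra F K]
    [FiniteDimensional F K] (q n : ℕ) (hq : q = Fintype.card F)
    (hn : n = Module.finrank F K) (a : Fin n → K) (f : K →ₗ[F] K)
    (hf : ∀ x : K, f x = ∑ i : Fin n, a i * x ^ q ^ (i : ℕ)) :
    (dicksonMatrix q a).det = algebraMap F K (LinearMap.det f) ∧
    (dicksonMatrix q a).det ∈ (algebraMap F K).range := by
  subst hq hn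
  have : (dicksonMatrix (Fintype.card F) a).det = algebraMap F K (LinearMap.det f) := by
    let b := Module.finBasis F K
    apply mul_right_cancel₀ (moore_det_ne_zero F K b)
    rw [← Matrix.det_mul, dickson_mul_moore F K b a f hf, Matrix.det_mul, mul_comm,
      ← LinearMap.det_toMatrix b, RingHom.map_det, RingHom.mapMatrix_apply]
  exact ⟨this, _, this.symm⟩
end

section
/- Let L be the linearized polynomial with coefficient vector a ∈ K^n, and let L* be its adjugate polynomial, i.e. the linearized polynomial whose i-th coefficient is adj(D(a))_{0,i}, the (0,i)-entry of the adjugate matrix of D(a). Then L(L*(x)) = L*(L(x)) = det(D(a)) · x for all x ∈ K. -/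
/-!
Write `v(x) = (x ^ q ^ j)_j`. Call a square matrix `A` over `K` *Frobenius-equivariant* if
`A i j ^ q = A (i + 1) (j + 1)` with indices modulo `n`, and similarly for a vector `w` if
`w i ^ q = w (i + 1)`; the latter forces `w = v(w 0)`. Since `x ^ q ^ n = x` on `K`, the vector
`v(x)` and the Dickson matrix `D` are equivariant, and an equivariant matrix sends equivariant
vectors to equivariant ones. Hence `D v(x) = v(L(x))`.

The adjugate commutes with ring homomorphisms and with simultaneous cyclic reindexing, so `adj D`
is equivariant as well and `adj D v(x) = v(L*(x))`. Row `0` of `D (adj D) v(x) = det D • v(x)` and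
of `(adj D) D v(x) = det D • v(x)` are the two identities.
-/

open scoped BigOperators

open Matrix in
/-- Over a finite field `F` of cardinality `q`, the adjugate inherits the equivariance
`A i j ^ q = A (i + 1) (j + 1)`: both sides are adjugates of the same matrix, one by applying the
Frobenius entrywise and the other by a cyclic reindexing. -/
lemma adjugate_frobenius (F : Type*) {K : Type*} [Field F] [Fintype F] [Field K] [Algebra F K]
    {n : ℕ} [NeZero n] (A : Matrix (Fin n) (Fin n) K)
    (hA : ∀ i j, A i j ^ Fintype.card F = A (i + 1) (j + 1)) (i j : Fin n) :
    A.adjugate i j ^ Fintype.card F = A.adjugate (i + 1) (j + 1) := by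
  let φ : K →+* K := (FiniteField.frobeniusAlgHom F K : K →+* K)
  have hφ : ∀ x, φ x = x ^ Fintype.card F := fun x => rfl
  have h : φ.mapMatrix A = A.submatrix (Equiv.addRight 1) (Equiv.addRight 1) := by
    ext i j
    simp [hφ, hA]
  have h2 := congrArg Matrix.adjugate h
  rw [← RingHom.map_adjugate, Matrix.adjugate_submatrix_equiv_self] at h2
  simpa [hφ] using congrFun (congrFun h2 i) j

lemma mulVec_frobenius (F : Type*) {K : Type*} [Field F] [Fintype F] [Field K] [Algebra F K]
    {n : ℕ} [NeZero n] (A : Matrix (Fin n) (Fin n) K) (w : Fin n → K)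
    (hA : ∀ i j, A i j ^ Fintype.card F = A (i + 1) (j + 1))
    (hw : ∀ i, w i ^ Fintype.card F = w (i + 1)) (i : Fin n) :
    (A.mulVec w) i ^ Fintype.card F = (A.mulVec w) (i + 1) := by
  let φ : K →+* K := (FiniteField.frobeniusAlgHom F K : K →+* K)
  have hφ : ∀ x, φ x = x ^ Fintype.card F := fun x => rfl
  rw [← hφ]
  simp only [Matrix.mulVec, dotProduct, map_sum, map_mul]
  simp only [hφ, hA, hw]
  exact Equiv.sum_comp (Equiv.addRight (1 : Fin n)) (fun j => A (i + 1) j * w j)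

/-- An equivariant vector is determined by its entry at `0`. -/
lemma eq_pow_of_frobenius {K : Type*} [Field K] {q n : ℕ} [NeZero n] (w : Fin n → K)
    (hw : ∀ i, w i ^ q = w (i + 1)) (i : Fin n) : w i = w 0 ^ q ^ (i : ℕ) := by
  have key : ∀ (k : ℕ) (hk : k < n), w ⟨k, hk⟩ = w 0 ^ q ^ k := by
    intro k
    induction k with
    | zero => intro hk; simp
    | succ k ih =>
      intro hk
      have h := hw ⟨k, by omega⟩
      have e : (⟨k, by omega⟩ + 1 : Fin n) = ⟨k + 1, hk⟩ := by
        apply Fin.ext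
        rw [Fin.val_add, Fin.val_one', Nat.add_mod_mod, Nat.mod_eq_of_lt hk]
      rw [e, ih (by omega)] at h
      rw [← h, pow_succ, pow_mul]
  exact key i i.2

/-- The exponents `q ^ i` may be read modulo `n`, because `x ^ q ^ n = x`. -/
lemma pow_pow_frobenius {K : Type*} [Field K] {q n : ℕ} [NeZero n] (x : K)
    (hx : x ^ q ^ n = x) (i : Fin n) :
    (x ^ q ^ (i : ℕ)) ^ q = x ^ q ^ ((i + 1 : Fin n) : ℕ) := by
  rw [← pow_mul, ← pow_succ, Fin.val_add, Fin.val_one', Nat.add_mod_mod]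
  rcases Nat.lt_or_ge ((i : ℕ) + 1) n with h | h
  · rw [Nat.mod_eq_of_lt h]
  · have e : (i : ℕ) + 1 = n := by omega
    rw [e, hx]
    simp

/-- For the linearized polynomial `L` with coefficient vector `a` and its adjugate polynomial
`L*` (with coefficients the first row of `adj(D(a))`), one has
`L(L*(x)) = L*(L(x)) = det(D(a)) * x` for all `x`. -/
theorem stmt5 (F K : Type*) [Field F] [Fintype F] [Field K] [Algebra F K]
    [FiniteDimensional F K] (q n : ℕ) [NeZero n] (hq : q = Fintype.card F)
    (hn : n = Module.finrank F K) (a : Fin n → K) :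
    ∀ x : K,
      (∑ i : Fin n, a i *
          (∑ j : Fin n, (dicksonMatrix q a).adjugate 0 j * x ^ q ^ (j : ℕ)) ^ q ^ (i : ℕ)
        = (dicksonMatrix q a).det * x) ∧
      (∑ i : Fin n, (dicksonMatrix q a).adjugate 0 i *
          (∑ j : Fin n, a j * x ^ q ^ (j : ℕ)) ^ q ^ (i : ℕ)
        = (dicksonMatrix q a).det * x) := by
  subst hq
  intro x
  have hpow : ∀ y : K, y ^ Fintype.card F ^ n = y := by
    intro y
    have : Finite K := Module.finite_of_finite F
    have := Fintype.ofFinite K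
    rw [hn, ← Module.card_eq_pow_finrank, FiniteField.pow_card]
  have hD : ∀ i j, dicksonMatrix (Fintype.card F) a i j ^ Fintype.card F
      = dicksonMatrix (Fintype.card F) a (i + 1) (j + 1) := by
    intro i j
    simp only [dicksonMatrix, Matrix.of_apply]
    rw [pow_pow_frobenius _ (hpow _), add_sub_add_right_eq_sub]
  have hadj := adjugate_frobenius F _ hD
  have hrow : ∀ y : Fin n → K, (dicksonMatrix (Fintype.card F) a).mulVec y 0
      = ∑ i, a i * y i := by
    intro y
    simp [Matrix.mulVec, dotProduct, dicksonMatrix]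
  set D := dicksonMatrix (Fintype.card F) a with hDdef
  let v : Fin n → K := fun j => x ^ Fintype.card F ^ (j : ℕ)
  have hv : ∀ i, v i ^ Fintype.card F = v (i + 1) := pow_pow_frobenius x (hpow x)
  have hv0 : v 0 = x := by simp [v]
  have h1 := eq_pow_of_frobenius _ (mulVec_frobenius F _ v hadj hv)
  have h2 := eq_pow_of_frobenius _ (mulVec_frobenius F _ v hD hv)
  constructor
  · have h : D.mulVec (D.adjugate.mulVec v) 0 = D.det * x := by
      rw [Matrix.mulVec_mulVec, Matrix.mul_adjugate, Matrix.smul_mulVec, Matrix.one_mulVec,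
        Pi.smul_apply, hv0, smul_eq_mul]
    rw [← h, hrow]
    exact Finset.sum_congr rfl fun i _ => by rw [h1 i]; rfl
  · have h : D.adjugate.mulVec (D.mulVec v) 0 = D.det * x := by
      rw [Matrix.mulVec_mulVec, Matrix.adjugate_mul, Matrix.smul_mulVec, Matrix.one_mulVec,
        Pi.smul_apply, hv0, smul_eq_mul]
    rw [← h]
    refine Finset.sum_congr rfl fun i _ => ?_
    rw [h2 i, hrow]
end

section
/- Let L(x) = Σ_{i=0}^{n-1} a_i x^{q^i} be a bijective linearized polynomial (a linearized permutation polynomial) and let ā_i = adj(D(a))_{0,i} be the (i,0)-th cofactor of its Dickson matrix D(a), 0 ≤ i ≤ n-1. Then det D(a) ≠ 0 and the compositional inverse of L is given by L^{-1}(x) = (det D(a))^{-1} · Σ_{i=0}^{n-1} ā_i x^{q^i} for all x ∈ K. -/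
/-!
Raising `L(x)` to the power `q^i` is additive and `x^(q^n) = x` on `K`, so the `i`-th row of the
Dickson matrix `D` lists the coefficients of `L(x)^(q^i)` (`pow_eval_eq_sum_dickson`). Hence a row
vector `v`, read as the linearized polynomial `∑ vᵢ x^(q^i)`, turns composition with `L` into
`v ↦ v D` (`sum_mul_pow_eval`).

If `v D = 0`, then `∑ vᵢ y^(q^i)` vanishes at every value of `L`, so on all of `K` by surjectivity.
Its degree is below `q^n = |K|`, so `v = 0` (`eq_zero_of_linearized_eq_zero`). Therefore `D` is
invertible. Taking for `v` row `0` of `adj D`, the identity `adj D * D = det D • 1` shows that the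
claimed map is a left inverse of `L`; surjectivity of `L` makes it a right inverse.
-/

open scoped BigOperators

section Dickson

variable {F K : Type*} [Field F] [Fintype F] [Field K] [Algebra F K]

theorem sum_pow_card_pow {ι : Type*} (s : Finset ι) (f : ι → K) (i : ℕ) :
    (∑ j ∈ s, f j) ^ Fintype.card F ^ i = ∑ j ∈ s, f j ^ Fintype.card F ^ i := by
  obtain ⟨p, hp⟩ := CharP.exists F
  obtain ⟨k, hpp, hk⟩ := FiniteField.card F p
  have : Fact p.Prime := ⟨hpp⟩
  have : CharP K p := charP_of_injective_algebraMap (algebraMap F K).injective p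
  rw [hk, ← pow_mul]
  exact sum_pow_char_pow p _ s f

theorem pow_card_pow_finrank [FiniteDimensional F K] (x : K) :
    x ^ Fintype.card F ^ Module.finrank F K = x := by
  have : Finite K := Module.finite_of_finite F
  have : Fintype K := Fintype.ofFinite K
  rw [← Module.card_eq_pow_finrank (K := F) (V := K)]
  exact FiniteField.pow_card x

/-- Frobenius exponents may be reduced modulo `n`: subtraction in `Fin n` is cyclic. -/
theorem pow_sub_pow [FiniteDimensional F K] {n : ℕ} (hn : n = Module.finrank F K)
    (i j : Fin n) (x : K) :
    (x ^ Fintype.card F ^ ((j - i : Fin n) : ℕ)) ^ Fintype.card F ^ (i : ℕ)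
      = x ^ Fintype.card F ^ (j : ℕ) := by
  rw [← pow_mul, ← pow_add]
  rcases le_or_gt i j with h | h
  · have h1 : ((j - i : Fin n) : ℕ) + i = j := by
      rw [Fin.sub_val_of_le h]
      have : (i : ℕ) ≤ j := h
      omega
    rw [h1]
  · have h1 : ((j - i : Fin n) : ℕ) + i = n + j := by
      rw [Fin.coe_sub_iff_lt.mpr h]
      have := i.isLt
      omega
    have h2 : x ^ Fintype.card F ^ n = x := hn ▸ pow_card_pow_finrank x
    rw [h1, pow_add, pow_mul, h2]

theorem pow_eval_eq_sum_dickson [FiniteDimensional F K] {n : ℕ} [NeZero n]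
    (hn : n = Module.finrank F K) (a : Fin n → K) (i : Fin n) (x : K) :
    (∑ j : Fin n, a j * x ^ Fintype.card F ^ (j : ℕ)) ^ Fintype.card F ^ (i : ℕ)
      = ∑ j : Fin n, dicksonMatrix (Fintype.card F) a i j * x ^ Fintype.card F ^ (j : ℕ) := by
  rw [sum_pow_card_pow, ← Equiv.sum_comp (Equiv.subRight i)]
  refine Finset.sum_congr rfl fun j _ => ?_
  rw [Equiv.subRight_apply, mul_pow, pow_sub_pow hn, dicksonMatrix, Matrix.of_apply]

/-- Composing the linearized polynomial with coefficients `v` with `L` multiplies the row vector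
`v` by the Dickson matrix of `L`. -/
theorem sum_mul_pow_eval [FiniteDimensional F K] {n : ℕ} [NeZero n]
    (hn : n = Module.finrank F K) (a v : Fin n → K) (x : K) :
    ∑ i : Fin n, v i *
        (∑ j : Fin n, a j * x ^ Fintype.card F ^ (j : ℕ)) ^ Fintype.card F ^ (i : ℕ)
      = ∑ j : Fin n, Matrix.vecMul v (dicksonMatrix (Fintype.card F) a) j *
          x ^ Fintype.card F ^ (j : ℕ) := by
  simp only [pow_eval_eq_sum_dickson hn, Finset.mul_sum, Matrix.vecMul, dotProduct,
    Finset.sum_mul]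
  rw [Finset.sum_comm]
  simp only [mul_assoc]

open Polynomial in
/-- A linearized polynomial of `q`-degree less than `n` has degree less than `|K|`, so it is
determined by its values. -/
theorem eq_zero_of_linearized_eq_zero [FiniteDimensional F K] {n : ℕ}
    (hn : n = Module.finrank F K) (v : Fin n → K)
    (h : ∀ y : K, ∑ i : Fin n, v i * y ^ Fintype.card F ^ (i : ℕ) = 0) : v = 0 := by
  have : Finite K := Module.finite_of_finite F
  have : Fintype K := Fintype.ofFinite K
  have hq : 1 < Fintype.card F := Fintype.one_lt_card
  set P : K[X] := ∑ i : Fin n, C (v i) * X ^ Fintype.card F ^ (i : ℕ) with hP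
  have hdeg : P.degree < (Fintype.card K : ℕ) := by
    refine (degree_sum_le _ _).trans_lt ?_
    refine (Finset.sup_lt_iff (WithBot.bot_lt_coe _)).mpr fun i _ => ?_
    refine (degree_C_mul_X_pow_le _ _).trans_lt ?_
    rw [Module.card_eq_pow_finrank (K := F) (V := K), ← hn]
    exact_mod_cast Nat.pow_lt_pow_right hq i.isLt
  have hP0 : P = 0 := by
    refine eq_zero_of_degree_lt_of_eval_finset_eq_zero Finset.univ (by simpa using hdeg) ?_
    intro y _
    simpa [hP, eval_finsetSum] using h y
  funext i
  have hc : P.coeff (Fintype.card F ^ (i : ℕ)) = v i := by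
    rw [hP, finsetSum_coeff, Finset.sum_eq_single i]
    · simp
    · intro j _ hj
      rw [coeff_C_mul_X_pow, if_neg]
      intro he
      exact hj (Fin.ext (Nat.pow_right_injective hq he).symm)
    · simp
  rw [← hc, hP0]
  simp

end Dickson

/-- For a linearized permutation polynomial `L` with coefficient vector `a` and
`āᵢ = adj(D(a))₀ᵢ`, one has `det D(a) ≠ 0` and
`L⁻¹(x) = (det D(a))⁻¹ * ∑ āᵢ x^(qⁱ)`, i.e. this map is a two-sided compositional
inverse of `L`. -/
theorem stmt6 (F K : Type*) [Field F] [Fintype F] [Field K] [Algebra F K]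
    [FiniteDimensional F K] (q n : ℕ) [NeZero n] (hq : q = Fintype.card F)
    (hn : n = Module.finrank F K) (a : Fin n → K)
    (hbij : Function.Bijective fun x : K => ∑ i : Fin n, a i * x ^ q ^ (i : ℕ)) :
    (dicksonMatrix q a).det ≠ 0 ∧
    ∀ x : K,
      ((dicksonMatrix q a).det⁻¹ *
          ∑ i : Fin n, (dicksonMatrix q a).adjugate 0 i *
            (∑ j : Fin n, a j * x ^ q ^ (j : ℕ)) ^ q ^ (i : ℕ)) = x ∧
      (∑ j : Fin n, a j *
          ((dicksonMatrix q a).det⁻¹ *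
            ∑ i : Fin n, (dicksonMatrix q a).adjugate 0 i * x ^ q ^ (i : ℕ)) ^ q ^ (j : ℕ)) = x := by
  subst hq
  have hdet : (dicksonMatrix (Fintype.card F) a).det ≠ 0 := by
    intro h0
    obtain ⟨v, hv, hvD⟩ := Matrix.exists_vecMul_eq_zero_iff.mpr h0
    refine hv (eq_zero_of_linearized_eq_zero hn v fun y => ?_)
    obtain ⟨x, rfl⟩ := hbij.2 y
    simp only [sum_mul_pow_eval hn, hvD, Pi.zero_apply, zero_mul, Finset.sum_const_zero]
  have hleft : ∀ x : K, (dicksonMatrix (Fintype.card F) a).det⁻¹ *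
      ∑ i : Fin n, (dicksonMatrix (Fintype.card F) a).adjugate 0 i *
        (∑ j : Fin n, a j * x ^ Fintype.card F ^ (j : ℕ)) ^ Fintype.card F ^ (i : ℕ) = x := by
    intro x
    -- Row `0` of `adj D * D` is `det D` times the coefficient vector of the identity map.
    have hrow : ∀ j : Fin n, Matrix.vecMul ((dicksonMatrix (Fintype.card F) a).adjugate 0)
        (dicksonMatrix (Fintype.card F) a) j
          = (dicksonMatrix (Fintype.card F) a).det * (1 : Matrix (Fin n) (Fin n) K) 0 j := by
      intro j
      have h := congrFun (congrFun (Matrix.adjugate_mul (dicksonMatrix (Fintype.card F) a)) 0) j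
      simpa [Matrix.mul_apply, Matrix.vecMul, dotProduct] using h
    rw [sum_mul_pow_eval hn, inv_mul_eq_iff_eq_mul₀ hdet]
    simp [hrow, Matrix.one_apply]
  refine ⟨hdet, fun x => ⟨hleft x, ?_⟩⟩
  obtain ⟨y, rfl⟩ := hbij.2 x
  simp only [hleft y]
end

section
/- Let α_0, …, α_{n-1} ∈ K and let M be the n×n Moore matrix over K with (i,j)-entry α_j^{q^i}. Let α̃_i = adj(M)_{i,0} denote the (0,i)-th cofactor of M. Then for all 0 ≤ i, j ≤ n-1, adj(M)_{i,j} = (-1)^{j(n+1)} (α̃_i)^{q^j}; equivalently, adj(M) = [α̃_i^{q^j}] · S, where [α̃_i^{q^j}] is the matrix with (i,j)-entry (α̃_i)^{q^j} and S is the diagonal matrix diag((-1)^0, (-1)^{n+1}, (-1)^{2(n+1)}, …, (-1)^{(n-1)(n+1)}). -/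
/-!
Since `x ^ (q ^ n) = x` on `K`, the `q`-power Frobenius `σ` of `K` over `F` cyclically shifts the
rows of the Moore matrix `M`. A ring homomorphism commutes with the adjugate, and permuting the rows
of a matrix permutes the columns of its adjugate up to the sign of the permutation
(`adjugate_permute_rows`). The sign of an `n`-cycle is `(-1) ^ (n + 1)`, so
`adj(M)ᵢⱼ ^ q = (-1) ^ (n + 1) * adj(M)ᵢ,ⱼ₊₁` (`moore_adjugate_step`), and induction on `j` gives the
formula. Invertibility of `M` plays no role.
-/

/-- Permuting rows permutes the columns of the adjugate, up to sign. -/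
theorem adjugate_permute_rows {m R : Type*} [Fintype m] [DecidableEq m] [CommRing R]
    (e : Equiv.Perm m) (A : Matrix m m R) (i j : m) :
    (A.submatrix e id).adjugate i j = (Equiv.Perm.sign e : R) * A.adjugate i (e j) := by
  rw [Matrix.adjugate_apply, Matrix.adjugate_apply, ← Matrix.det_permute]
  congr 1
  ext a b
  by_cases h : a = j
  · subst h; simp
  · have h' : e a ≠ e j := fun h' => h (e.injective h')
    simp [Matrix.updateRow_ne h, Matrix.updateRow_ne h']

/-- Frobenius permutes the columns of the adjugate of the Moore matrix cyclically, up to sign. -/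
theorem moore_adjugate_step (F K : Type*) [Field F] [Fintype F] [Field K] [Algebra F K]
    [FiniteDimensional F K] (n : ℕ) (hn : n = Module.finrank F K) (α : Fin n → K)
    (i j : Fin n) :
    (Matrix.of fun i j : Fin n => (α j) ^ Fintype.card F ^ (i : ℕ)).adjugate i j
        ^ Fintype.card F =
      (-1 : K) ^ (n + 1) *
        (Matrix.of fun i j : Fin n => (α j) ^ Fintype.card F ^ (i : ℕ)).adjugate i
          (finRotate n j) := by
  set M : Matrix (Fin n) (Fin n) K := Matrix.of fun i j => (α j) ^ Fintype.card F ^ (i : ℕ)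
    with hM
  let σ : K →+* K := (FiniteField.frobeniusAlgHom F K : K →ₐ[F] K)
  have hσ (x : K) : σ x = x ^ Fintype.card F := rfl
  have : Finite K := Module.finite_of_finite F
  have : Fintype K := Fintype.ofFinite K
  have hfix (x : K) : x ^ Fintype.card F ^ n = x := by
    rw [hn, ← Module.card_eq_pow_finrank (K := F) (V := K), FiniteField.pow_card]
  have hmap : σ.mapMatrix M = M.submatrix (finRotate n) id := by
    ext a b
    obtain ⟨m, rfl⟩ : ∃ m, n = m + 1 := ⟨n - 1, by have := a.2; omega⟩
    simp only [RingHom.mapMatrix_apply, Matrix.map_apply, Matrix.submatrix_apply, hM,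
      Matrix.of_apply, id, hσ, ← pow_mul, ← pow_succ]
    rw [coe_finRotate]
    split_ifs with h
    · subst h; simp [hfix]
    · rfl
  have key : σ (M.adjugate i j) = (M.submatrix (finRotate n) id).adjugate i j := by
    rw [← hmap, ← RingHom.map_adjugate]; rfl
  rw [← hσ, key, adjugate_permute_rows, sign_finRotate]
  obtain ⟨m, rfl⟩ : ∃ m, n = m + 1 := ⟨n - 1, by have := i.2; omega⟩
  simp [pow_succ]

/-- For the Moore matrix `M = [αⱼ^(qⁱ)]` with `α̃ᵢ = adj(M)ᵢ₀`, one has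
`adj(M)ᵢⱼ = (-1)^(j(n+1)) (α̃ᵢ)^(qʲ)`; equivalently `adj(M) = [α̃ᵢ^(qʲ)] · S` with
`S = diag((-1)^(j(n+1)))`. -/
theorem stmt8 (F K : Type*) [Field F] [Fintype F] [Field K] [Algebra F K]
    [FiniteDimensional F K] (q n : ℕ) [NeZero n] (hq : q = Fintype.card F)
    (hn : n = Module.finrank F K) (α : Fin n → K) :
    (∀ i j : Fin n,
      (Matrix.of fun i j : Fin n => (α j) ^ q ^ (i : ℕ)).adjugate i j =
        (-1 : K) ^ ((j : ℕ) * (n + 1)) *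
          ((Matrix.of fun i j : Fin n => (α j) ^ q ^ (i : ℕ)).adjugate i 0) ^ q ^ (j : ℕ)) ∧
    (Matrix.of fun i j : Fin n => (α j) ^ q ^ (i : ℕ)).adjugate =
      (Matrix.of fun i j : Fin n =>
          ((Matrix.of fun i j : Fin n => (α j) ^ q ^ (i : ℕ)).adjugate i 0) ^ q ^ (j : ℕ)) *
        Matrix.diagonal (fun j : Fin n => (-1 : K) ^ ((j : ℕ) * (n + 1))) := by
  subst hq
  have main : ∀ (i : Fin n) (k : ℕ) (hk : k < n),
      (Matrix.of fun i j : Fin n => (α j) ^ Fintype.card F ^ (i : ℕ)).adjugate i ⟨k, hk⟩ =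
        (-1 : K) ^ (k * (n + 1)) *
          ((Matrix.of fun i j : Fin n => (α j) ^ Fintype.card F ^ (i : ℕ)).adjugate i 0)
            ^ Fintype.card F ^ k := by
    intro i k
    induction k with
    | zero => intro hk; simp
    | succ k ih =>
      intro hk
      have step := moore_adjugate_step F K n hn α i ⟨k, by omega⟩
      have hrot : finRotate n ⟨k, by omega⟩ = ⟨k + 1, hk⟩ := by
        obtain ⟨m, rfl⟩ : ∃ m, n = m + 1 := ⟨n - 1, by omega⟩
        exact finRotate_of_lt (by omega)
      -- In characteristic two the cardinality of `F` is even, but then `-1 = 1`.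
      have hneg : (-1 : K) ^ Fintype.card F = -1 := by
        have := map_neg (FiniteField.frobeniusAlgHom F K) (1 : K)
        simpa [FiniteField.coe_frobeniusAlgHom] using this
      have hsq : (-1 : K) ^ (n + 1) * (-1 : K) ^ (n + 1) = 1 := by
        rw [← mul_pow]; simp
      rw [hrot, ih (by omega), mul_pow, ← pow_mul, ← pow_mul, mul_comm (k * (n + 1)),
        pow_mul (-1 : K), hneg, ← pow_succ] at step
      rw [add_mul, one_mul, pow_add, mul_comm ((-1 : K) ^ (k * (n + 1))), mul_assoc, step,
        ← mul_assoc, hsq, one_mul]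
  refine ⟨fun i j => main i j j.2, ?_⟩
  ext i j
  rw [Matrix.mul_diagonal, Matrix.of_apply, mul_comm]
  exact main i j j.2
end

section
/- Let α_0, …, α_{n-1} ∈ K form a basis of K over F, let M be the n×n Moore matrix over K with (i,j)-entry α_j^{q^i}, and let α̃_i = adj(M)_{i,0} be the (0,i)-th cofactor of M, 0 ≤ i ≤ n-1. Then α̃_0, …, α̃_{n-1} also form a basis of K over F. -/
open scoped BigOperators

/-!
Let `β` be the basis dual to `α` for the trace form of `K / F`. Since the trace is
`x ↦ ∑ₖ x ^ q ^ k`, the relations `Tr (βᵢ αⱼ) = δᵢⱼ` say exactly that the matrix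
`(βᵢ ^ q ^ k)ᵢₖ` is inverse to the Moore matrix `M` of `α` (`dual_mul_moore`). Hence
`adj M = det M • (βᵢ ^ q ^ k)ᵢₖ`, whose column of index `0` is `det M • β` with `det M ≠ 0`.
A nonzero multiple of a basis is again a basis.
-/

/-- The Moore matrix of a basis is inverted by the transposed Moore matrix of its trace dual:
the entries of the product are the traces `Tr (βᵢ αⱼ)`. -/
theorem dual_mul_moore {F K : Type*} [Field F] [Fintype F] [Field K] [Algebra F K]
    [FiniteDimensional F K] {n : ℕ} (hn : n = Module.finrank F K)
    (b : Module.Basis (Fin n) F K) :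
    (Matrix.of fun i k : Fin n => b.traceDual i ^ Fintype.card F ^ (k : ℕ)) *
      (Matrix.of fun k j : Fin n => b j ^ Fintype.card F ^ (k : ℕ)) = 1 := by
  have : Finite K := Module.finite_of_finite F
  ext i j
  have h := FiniteField.algebraMap_trace_eq_sum_pow F K (b.traceDual i * b j)
  rw [b.trace_traceDual_mul, ← hn, Finset.sum_range, Nat.card_eq_fintype_card] at h
  simp only [Matrix.mul_apply, Matrix.of_apply, ← mul_pow]
  rw [← h, Matrix.one_apply]
  by_cases hij : i = j
  · simp [hij]
  · simp [hij, Ne.symm hij]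

/-- If `α₀, …, α_{n-1}` form a basis of `K` over `F` and `α̃ᵢ = adj(M)ᵢ₀` where `M` is the
Moore matrix of `α`, then `α̃₀, …, α̃_{n-1}` also form a basis of `K` over `F`. -/
theorem stmt9 (F K : Type*) [Field F] [Fintype F] [Field K] [Algebra F K]
    [FiniteDimensional F K] (q n : ℕ) [NeZero n] (hq : q = Fintype.card F)
    (hn : n = Module.finrank F K) (α : Fin n → K)
    (hli : LinearIndependent F α) (hsp : Submodule.span F (Set.range α) = ⊤) :
    LinearIndependent F
        (fun i : Fin n => (Matrix.of fun i j : Fin n => (α j) ^ q ^ (i : ℕ)).adjugate i 0) ∧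
      Submodule.span F
        (Set.range fun i : Fin n =>
          (Matrix.of fun i j : Fin n => (α j) ^ q ^ (i : ℕ)).adjugate i 0) = ⊤ := by
  subst hq
  set M : Matrix (Fin n) (Fin n) K := Matrix.of fun i j => α j ^ Fintype.card F ^ (i : ℕ) with hM
  let b := Module.Basis.mk hli hsp.ge
  set B : Matrix (Fin n) (Fin n) K :=
    Matrix.of fun i k => b.traceDual i ^ Fintype.card F ^ (k : ℕ) with hB
  have hBM : B * M = 1 := by simpa [b, hB, hM] using dual_mul_moore hn b
  have hdet : M.det ≠ 0 := by
    intro h0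
    simpa [h0] using congrArg Matrix.det hBM
  have hadj : M.adjugate = M.det • B := by
    calc M.adjugate = M.adjugate * (M * B) := by rw [mul_eq_one_comm.mp hBM, mul_one]
      _ = M.det • B := by rw [← mul_assoc, Matrix.adjugate_mul, Matrix.smul_mul, one_mul]
  have hcol : (fun i => M.adjugate i 0) = LinearMap.mulLeft F M.det ∘ b.traceDual := by
    funext i
    simp [hadj, hB]
  have hind : LinearIndependent F fun i => M.adjugate i 0 := by
    rw [hcol]
    exact b.traceDual.linearIndependent.map' _
      (LinearMap.ker_eq_bot.mpr (mul_right_injective₀ hdet))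
  exact ⟨hind, hind.span_eq_top_of_card_eq_finrank (by simpa using hn)⟩
end

section
/- For every a ∈ K^n, the adjugate matrix of the Dickson matrix D(a) is again a Dickson matrix: there exists b ∈ K^n such that adj(D(a)) = D(b). -/
/-!
A matrix `M` is a Dickson matrix exactly when `M (i+1) (j+1) = M i j ^ q` for all cyclic indices
`i, j`: simultaneously shifting rows and columns is the same as applying the `q`-Frobenius
entrywise. That a Dickson matrix has this property at the wrap-around row uses `x ^ q ^ n = x`
in `K`; conversely the property determines `M` from its row `0`, which is the vector `b`.
The adjugate commutes both with a simultaneous reindexing of rows and columns and with entrywise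
application of a ring homomorphism, so it preserves this property.
-/

open scoped BigOperators

/-- The wrap-around case rests on `x ^ q ^ (m + 1) = x`. -/
theorem dicksonMatrix_shift {K : Type*} [Field K] {q m : ℕ}
    (hK : ∀ x : K, x ^ q ^ (m + 1) = x) (a : Fin (m + 1) → K) (i j : Fin (m + 1)) :
    dicksonMatrix q a (i + 1) (j + 1) = dicksonMatrix q a i j ^ q := by
  simp only [dicksonMatrix, Matrix.of_apply, add_sub_add_right_eq_sub]
  rw [← pow_mul, ← pow_succ, Fin.val_add_one]
  split_ifs with h
  · subst h
    simp [hK]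
  · rfl

open scoped Fin.CommRing in
/-- A matrix on which the cyclic shift acts as the `q`-power map is the Dickson matrix of its
row `0`. -/
theorem eq_dicksonMatrix_of_shift {K : Type*} [Field K] {q m : ℕ}
    (M : Matrix (Fin (m + 1)) (Fin (m + 1)) K)
    (h : ∀ i j, M (i + 1) (j + 1) = M i j ^ q) : M = dicksonMatrix q (M 0) := by
  have key : ∀ (k : ℕ) (j : Fin (m + 1)),
      M (k : Fin (m + 1)) (j + (k : Fin (m + 1))) = M 0 j ^ q ^ k := by
    intro k j
    induction k with
    | zero => simp
    | succ k ih => rw [Nat.cast_succ, ← add_assoc, h, ih, ← pow_mul, ← pow_succ]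
  ext i j
  simpa [dicksonMatrix] using key i (j - i)

/-- The adjugate of a Dickson matrix is again a Dickson matrix. -/
theorem stmt10 (F K : Type*) [Field F] [Fintype F] [Field K] [Algebra F K]
    [FiniteDimensional F K] (q n : ℕ) (hq : q = Fintype.card F)
    (hn : n = Module.finrank F K) (a : Fin n → K) :
    ∃ b : Fin n → K, (dicksonMatrix q a).adjugate = dicksonMatrix q b := by
  have hpos : 0 < n := hn ▸ Module.finrank_pos
  obtain ⟨m, rfl⟩ := Nat.exists_eq_succ_of_ne_zero hpos.ne'
  have hK : ∀ x : K, x ^ q ^ (m + 1) = x := by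
    have : Finite K := Module.finite_of_finite F
    have := Fintype.ofFinite K
    intro x
    have hc : Fintype.card K = q ^ (m + 1) := by
      rw [hq, Module.card_eq_pow_finrank (K := F) (V := K), ← hn]
    rw [← hc, FiniteField.pow_card]
  let φ : K →+* K := (FiniteField.frobeniusAlgHom F K : K →ₐ[F] K)
  have hφ : ∀ x, φ x = x ^ q := fun x => by
    simp [φ, hq]
  let e : Fin (m + 1) ≃ Fin (m + 1) := Equiv.addRight 1
  have hM : (dicksonMatrix q a).submatrix e e = φ.mapMatrix (dicksonMatrix q a) := by
    ext i j
    simpa [e, hφ] using dicksonMatrix_shift hK a i j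
  refine ⟨_, eq_dicksonMatrix_of_shift _ fun i j => ?_⟩
  have h := congrArg Matrix.adjugate hM
  rw [Matrix.adjugate_submatrix_equiv_self, ← RingHom.map_adjugate] at h
  simpa [e, hφ] using congrFun (congrFun h i) j
end

section
/- Let γ ∈ K, γ ≠ 0, and let L(x) = x^q − γ^{q−1} x. Then the adjugate polynomial of L satisfies L*(x) = (−1)^{n−1} γ · tr(x / γ^q) for all x ∈ K; equivalently, the (i,0)-th cofactor of the Dickson matrix of L equals (−1)^{n−1} γ^{1−q^{i+1}} for 0 ≤ i ≤ n−1. In particular, the kernel of L is the F-line γ·F and the image of L is the hyperplane {x ∈ K : tr(x / γ^q) = 0}. -/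
/-!
Write `φ x = x ^ q` for the `F`-linear Frobenius of `K`, so that `L(γ y) = γ ^ q (φ y - y)`.

The kernel of `φ - 1` is `F`, hence `ker L = γ F`, and by rank-nullity the range of `φ - 1`, which
is contained in the hyperplane `ker tr`, is all of it (additive Hilbert 90).  Rescaling gives the
image of `L`.

For the cofactors: the Dickson matrix `D` has diagonal entries `-γ ^ ((q-1) q^i)`, entries `1` at
the cyclic superdiagonal positions `(i, i+1)`, and zeros elsewhere.  Deleting row and column `0`
leaves an upper triangular matrix, so `adj(D)₀₀` is the product of the remaining diagonal entries,
`(-1)^(n-1) γ^(q^n - q) = (-1)^(n-1) γ^(1-q)`.  Since `D` kills the vector `(γ^(q^j))_j`,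
`det D = 0`, so `adj(D) D = 0`; reading off row `0` and column `j+1` gives the two-term recursion
`adj(D)₀ⱼ = γ^((q-1) q^(j+1)) adj(D)₀,ⱼ₊₁`, which propagates the formula to all `j`.  The formula
for `L*` then follows from `tr y = ∑ y^(q^i)`.
-/

open scoped BigOperators

section Frobenius

variable {F K : Type*} [Field F] [Fintype F] [Field K] [Algebra F K] [FiniteDimensional F K]

/-- The elements of `K` fixed by the `q`-power map are those of `F`. -/
lemma pow_card_eq_self_iff (x : K) :
    x ^ Fintype.card F = x ↔ ∃ c : F, algebraMap F K c = x := by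
  have : Finite K := Module.finite_of_finite F
  constructor
  · intro hx
    have := (IsGalois.mem_range_algebraMap_iff_fixed (F := F) x).2 fun f => by
      obtain ⟨k, rfl⟩ := (FiniteField.bijective_frobeniusAlgEquivOfAlgebraic_pow F K).2 f
      rw [AlgEquiv.coe_pow]
      exact Function.iterate_fixed
        (by rw [FiniteField.coe_frobeniusAlgEquivOfAlgebraic]; exact hx) _
    exact this
  · rintro ⟨c, rfl⟩
    rw [← map_pow, FiniteField.pow_card]

/-- Additive Hilbert 90 for `K/F`: the trace-zero elements are the `y ^ q - y`. -/
lemma trace_eq_zero_iff_exists_pow_sub (x : K) :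
    Algebra.trace F K x = 0 ↔ ∃ y : K, y ^ Fintype.card F - y = x := by
  have : Finite K := Module.finite_of_finite F
  let φ := FiniteField.frobeniusAlgEquivOfAlgebraic F K
  let T : K →ₗ[F] K := φ.toLinearMap - LinearMap.id
  have hT : ∀ y, T y = y ^ Fintype.card F - y := fun y => rfl
  have hle : LinearMap.range T ≤ LinearMap.ker (Algebra.trace F K) := by
    rintro _ ⟨y, rfl⟩
    have : T y = φ y - y := rfl
    rw [LinearMap.mem_ker, this, map_sub, Algebra.trace_eq_of_algEquiv φ y, sub_self]
  have hkerT : Module.finrank F (LinearMap.ker T) = 1 := by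
    have : LinearMap.ker T = F ∙ (1 : K) := by
      ext y
      rw [LinearMap.mem_ker, hT, sub_eq_zero, pow_card_eq_self_iff, Submodule.mem_span_singleton]
      simp [Algebra.smul_def]
    rw [this, finrank_span_singleton one_ne_zero]
  have hrange : Module.finrank F (LinearMap.range (Algebra.trace F K)) = 1 := by
    rw [LinearMap.range_eq_top.2 (Algebra.trace_surjective F K), finrank_top, Module.finrank_self]
  have h1 := LinearMap.finrank_range_add_finrank_ker T
  have h2 := LinearMap.finrank_range_add_finrank_ker (Algebra.trace F K)
  have heq := Submodule.eq_of_le_of_finrank_eq hle (by omega)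
  rw [← LinearMap.mem_ker, ← heq, LinearMap.mem_range]
  rfl

end Frobenius

section Cofactors

variable {K : Type*} [Field K]

/-- The coefficient vector of `x ^ q - γ ^ (q - 1) x`. -/
def binomialCoeffs (q m : ℕ) (γ : K) : Fin (m + 1) → K := fun i =>
  if (i : ℕ) = 0 then -γ ^ (q - 1) else if (i : ℕ) = 1 then 1 else 0

/-- The hypothesis `hneg` is all that is used of the additivity of `x ↦ x ^ q`. -/
lemma dicksonMatrix_binomialCoeffs_apply {q m : ℕ} (hq : q ≠ 0) (hm : m ≠ 0)
    (hneg : ∀ (x : K) (k : ℕ), (-x) ^ q ^ k = -x ^ q ^ k) (γ : K) (i j : Fin (m + 1)) :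
    dicksonMatrix q (binomialCoeffs q m γ) i j =
      if j = i then -γ ^ ((q - 1) * q ^ (i : ℕ)) else if j = i + 1 then 1 else 0 := by
  have h0 : ((j - i : Fin (m + 1)) : ℕ) = 0 ↔ j = i := by
    rw [Fin.val_eq_zero_iff, sub_eq_zero]
  have h1 : ((j - i : Fin (m + 1)) : ℕ) = 1 ↔ j = i + 1 := by
    have hv : ((1 : Fin (m + 1)) : ℕ) = 1 := by
      rw [Fin.val_one']; exact Nat.mod_eq_of_lt (by omega)
    rw [← sub_eq_iff_eq_add', Fin.ext_iff, hv]
  simp only [dicksonMatrix, binomialCoeffs, Matrix.of_apply, h0, h1]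
  split_ifs with h h'
  · rw [hneg, pow_mul]
  · exact one_pow _
  · exact zero_pow (pow_ne_zero _ hq)

lemma det_dicksonMatrix_binomialCoeffs {q m : ℕ} (hq : q ≠ 0) (hm : m ≠ 0)
    (hneg : ∀ (x : K) (k : ℕ), (-x) ^ q ^ k = -x ^ q ^ k) {γ : K} (hγ : γ ≠ 0)
    (hcard : γ ^ q ^ (m + 1) = γ) :
    (dicksonMatrix q (binomialCoeffs q m γ)).det = 0 := by
  refine Matrix.exists_mulVec_eq_zero_iff.1 ⟨fun j => γ ^ q ^ (j : ℕ), ?_, ?_⟩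
  · intro h
    exact pow_ne_zero _ hγ (congrFun h 0)
  · ext i
    have hne : i + 1 ≠ i := by
      intro h
      have : (1 : Fin (m + 1)) = 0 := by simpa using h
      rw [Fin.ext_iff, Fin.val_one', Nat.mod_eq_of_lt (by omega)] at this
      simp at this
    -- at the last row the exponent wraps around, which `hcard` absorbs
    have hsucc : γ ^ q ^ ((i + 1 : Fin (m + 1)) : ℕ) = γ ^ q ^ ((i : ℕ) + 1) := by
      rw [Fin.val_add_one]
      split_ifs with h
      · subst h; simp [hcard]
      · rfl
    rw [Matrix.mulVec, dotProduct, Fintype.sum_eq_add i (i + 1) hne.symm]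
    · simp only [dicksonMatrix_binomialCoeffs_apply hq hm hneg, if_true, if_neg hne, hsucc,
        Pi.zero_apply]
      obtain ⟨r, rfl⟩ := Nat.exists_eq_succ_of_ne_zero hq
      simp only [Nat.succ_eq_add_one, Nat.add_sub_cancel]
      ring
    · rintro j ⟨h1, h2⟩
      rw [dicksonMatrix_binomialCoeffs_apply hq hm hneg, if_neg h1, if_neg h2, zero_mul]

/-- Deleting row and column `0` leaves a triangular matrix. -/
lemma adjugate_dicksonMatrix_zero_zero {q m : ℕ} (hq : q ≠ 0) (hm : m ≠ 0)
    (hneg : ∀ (x : K) (k : ℕ), (-x) ^ q ^ k = -x ^ q ^ k) {γ : K} (hγ : γ ≠ 0)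
    (hcard : γ ^ q ^ (m + 1) = γ) :
    (dicksonMatrix q (binomialCoeffs q m γ)).adjugate 0 0 =
      (-1) ^ m * γ ^ ((1 : ℤ) - q) := by
  have hent : ∀ i j : Fin m, dicksonMatrix q (binomialCoeffs q m γ) i.succ j.succ =
      if j = i then -γ ^ ((q - 1) * q ^ ((i : ℕ) + 1))
        else if j.succ = i.succ + 1 then 1 else 0 := fun i j => by
    rw [dicksonMatrix_binomialCoeffs_apply hq hm hneg]
    simp
  rw [Matrix.adjugate_fin_succ_eq_det_submatrix, Matrix.det_of_isUpperTriangular]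
  · simp only [Matrix.submatrix_apply, Fin.succAbove_zero, hent, if_true]
    simp only [← neg_one_mul (γ ^ _), Finset.prod_mul_distrib, Finset.prod_const,
      Finset.card_univ, Fintype.card_fin, Finset.prod_pow_eq_pow_sum]
    simp only [Fin.val_zero, add_zero, pow_zero, one_mul]
    congr 1
    -- the exponents form the telescoping sum `q ^ (m + 1) - q`
    have hsum : ∀ k : ℕ, (∑ i : Fin k, (q - 1) * q ^ ((i : ℕ) + 1)) + q = q ^ (k + 1) := by
      intro k
      induction k with
      | zero => simp
      | succ k ih =>
        rw [Fin.sum_univ_castSucc]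
        simp only [Fin.val_castSucc, Fin.val_last]
        rw [add_right_comm, ih]
        obtain ⟨r, rfl⟩ := Nat.exists_eq_succ_of_ne_zero hq
        simp only [Nat.succ_eq_add_one, Nat.add_sub_cancel]
        ring
    rw [zpow_sub₀ hγ, zpow_one, zpow_natCast, eq_div_iff (pow_ne_zero _ hγ), ← pow_add, hsum,
      hcard]
  · intro i j hij
    have hij : j < i := hij
    have hne : j.succ ≠ i.succ + 1 := by
      intro h
      have h := congrArg Fin.val h
      rw [Fin.val_add_one] at h
      have := Fin.lt_def.1 hij
      split_ifs at h <;> simp at h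
      omega
    simp only [Matrix.submatrix_apply, Fin.succAbove_zero, hent]
    rw [if_neg hij.ne, if_neg hne]

/-- The relation `adj(D) D = 0` read in row `0` and column `j + 1`. -/
lemma adjugate_dicksonMatrix_castSucc {q m : ℕ} (hq : q ≠ 0) (hm : m ≠ 0)
    (hneg : ∀ (x : K) (k : ℕ), (-x) ^ q ^ k = -x ^ q ^ k) {γ : K} (hγ : γ ≠ 0)
    (hcard : γ ^ q ^ (m + 1) = γ) (j : Fin m) :
    (dicksonMatrix q (binomialCoeffs q m γ)).adjugate 0 j.castSucc =
      (dicksonMatrix q (binomialCoeffs q m γ)).adjugate 0 j.succ *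
        γ ^ ((q - 1) * q ^ ((j : ℕ) + 1)) := by
  have h := congrFun (congrFun
    (Matrix.adjugate_mul (dicksonMatrix q (binomialCoeffs q m γ))) 0) j.succ
  rw [det_dicksonMatrix_binomialCoeffs hq hm hneg hγ hcard, zero_smul, Matrix.zero_apply,
    Matrix.mul_apply, Fintype.sum_eq_add j.castSucc j.succ j.castSucc_lt_succ.ne] at h
  · simp only [dicksonMatrix_binomialCoeffs_apply hq hm hneg, Fin.coeSucc_eq_succ, if_true,
      j.castSucc_lt_succ.ne', if_false, Fin.val_succ] at h
    linear_combination h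
  · rintro i ⟨h1, h2⟩
    rw [dicksonMatrix_binomialCoeffs_apply hq hm hneg, if_neg (Ne.symm h2), if_neg, mul_zero]
    rw [← Fin.coeSucc_eq_succ]
    intro h
    exact h1 (add_right_cancel h).symm

lemma adjugate_dicksonMatrix_binomialCoeffs {q m : ℕ} (hq : q ≠ 0) (hm : m ≠ 0)
    (hneg : ∀ (x : K) (k : ℕ), (-x) ^ q ^ k = -x ^ q ^ k) {γ : K} (hγ : γ ≠ 0)
    (hcard : γ ^ q ^ (m + 1) = γ) (i : Fin (m + 1)) :
    (dicksonMatrix q (binomialCoeffs q m γ)).adjugate 0 i =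
      (-1) ^ m * γ ^ ((1 : ℤ) - (q : ℤ) ^ ((i : ℕ) + 1)) := by
  induction i using Fin.induction with
  | zero => simpa using adjugate_dicksonMatrix_zero_zero hq hm hneg hγ hcard
  | succ j ih =>
    rw [adjugate_dicksonMatrix_castSucc hq hm hneg hγ hcard] at ih
    refine mul_right_cancel₀ (pow_ne_zero ((q - 1) * q ^ ((j : ℕ) + 1)) hγ) (ih.trans ?_)
    rw [mul_assoc, ← zpow_natCast γ ((q - 1) * _), ← zpow_add₀ hγ]
    congr 2
    rw [Fin.val_succ, Fin.val_castSucc]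
    push_cast [Nat.one_le_iff_ne_zero.2 hq]
    ring

end Cofactors

/-- For `L(x) = x^q - γ^(q-1) x` with `γ ≠ 0`: the adjugate polynomial satisfies
`L*(x) = (-1)^(n-1) γ tr(x/γ^q)`, equivalently its coefficients are
`adj(D)₀ᵢ = (-1)^(n-1) γ^(1-q^(i+1))`; in particular `ker L = γ·F` and
`Im L = {x : tr(x/γ^q) = 0}`. -/
theorem stmt12 (F K : Type*) [Field F] [Fintype F] [Field K] [Algebra F K]
    [FiniteDimensional F K] (q n : ℕ) [NeZero n] (hq : q = Fintype.card F)
    (hn : n = Module.finrank F K) (hn1 : 1 < n) (γ : K) (hγ : γ ≠ 0)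
    (a : Fin n → K)
    (ha : a = fun i : Fin n =>
      if (i : ℕ) = 0 then -γ ^ (q - 1) else if (i : ℕ) = 1 then 1 else 0) :
    (∀ x : K,
      ∑ i : Fin n, (dicksonMatrix q a).adjugate 0 i * x ^ q ^ (i : ℕ) =
        (-1 : K) ^ (n - 1) * γ * algebraMap F K (Algebra.trace F K (x / γ ^ q))) ∧
    (∀ i : Fin n,
      (dicksonMatrix q a).adjugate 0 i =
        (-1 : K) ^ (n - 1) * γ ^ ((1 : ℤ) - (q : ℤ) ^ ((i : ℕ) + 1))) ∧
    {x : K | x ^ q - γ ^ (q - 1) * x = 0} = Set.range (fun c : F => algebraMap F K c * γ) ∧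
    Set.range (fun x : K => x ^ q - γ ^ (q - 1) * x) =
      {x : K | Algebra.trace F K (x / γ ^ q) = 0} := by
  have : Finite K := Module.finite_of_finite F
  have : Fintype K := Fintype.ofFinite K
  obtain ⟨m, rfl⟩ : ∃ m, n = m + 1 := ⟨n - 1, by omega⟩
  have hm : m ≠ 0 := by omega
  have hq0 : q ≠ 0 := hq ▸ Fintype.card_ne_zero
  have hneg : ∀ (x : K) (k : ℕ), (-x) ^ q ^ k = -x ^ q ^ k := fun x k => by
    have h := congrFun (FiniteField.coe_frobeniusAlgEquivOfAlgebraic_iterate F K k)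
    simp only [← AlgEquiv.coe_pow, ← hq] at h
    rw [← h, ← h, map_neg]
  have hcard : γ ^ q ^ (m + 1) = γ := by
    rw [hq, hn, ← Module.card_eq_pow_finrank, FiniteField.pow_card]
  have hcof : ∀ i : Fin (m + 1), (dicksonMatrix q a).adjugate 0 i =
      (-1 : K) ^ (m + 1 - 1) * γ ^ ((1 : ℤ) - (q : ℤ) ^ ((i : ℕ) + 1)) := by
    rw [ha]
    exact adjugate_dicksonMatrix_binomialCoeffs hq0 hm hneg hγ hcard
  have hpow : γ ^ q = γ ^ (q - 1) * γ := (pow_sub_one_mul hq0 γ).symm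
  -- the substitution `x = γ y` turns `L` into `γ ^ q (y ^ q - y)`
  have hL : ∀ y : K, (y * γ) ^ q - γ ^ (q - 1) * (y * γ) = (y ^ q - y) * γ ^ q := fun y => by
    rw [mul_pow, hpow]
    ring
  refine ⟨fun x => ?_, hcof, ?_, ?_⟩
  · rw [FiniteField.algebraMap_trace_eq_sum_pow, ← hn, Nat.card_eq_fintype_card, ← hq,
      Finset.sum_range, Finset.mul_sum]
    refine Finset.sum_congr rfl fun i _ => ?_
    rw [hcof, zpow_sub₀ hγ, zpow_one, div_pow, ← pow_mul, ← pow_succ']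
    norm_cast
    ring
  · ext x
    obtain ⟨y, rfl⟩ : ∃ y, x = y * γ := ⟨x / γ, (div_mul_cancel₀ x hγ).symm⟩
    rw [Set.mem_ofPred_eq, hL]
    simp only [Set.mem_range, mul_eq_zero, pow_ne_zero _ hγ, or_false,
      sub_eq_zero, mul_left_inj' hγ]
    rw [hq, pow_card_eq_self_iff]
  · ext x
    rw [Set.mem_ofPred_eq, trace_eq_zero_iff_exists_pow_sub, Set.mem_range, ← hq]
    simp only [eq_div_iff (pow_ne_zero q hγ), ← hL]
    constructor
    · rintro ⟨z, rfl⟩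
      exact ⟨z / γ, by rw [div_mul_cancel₀ z hγ]⟩
    · rintro ⟨y, rfl⟩
      exact ⟨y * γ, rfl⟩
end

section
/- Let β ∈ K be a normal basis generator, i.e. β, β^q, …, β^{q^{n-1}} form a basis of K over F, and let α ∈ K. Let p(X) = Σ_{i=0}^{n-1} tr(α β^{q^i}) X^i ∈ F[X]. Then the dimension over F of the F-span of {α, α^q, …, α^{q^{n-1}}} equals n − deg gcd(p(X), X^n − 1), where the gcd is taken in the polynomial ring F[X]. -/
/-!
Let `φ` be the Frobenius of `K` over `F`, so `φ ^ n = 1`. The basis of `K` dual to the normal basis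
generated by `β` under the trace form is again normal, generated by some `γ`
(`exists_dual_normal_generator`). Expanding `α` in it gives `α = p(φ) γ`. Since the conjugates
of `γ` span `K` and `p(φ)` commutes with `φ`, the conjugates of `α` span the range of `p(φ)`.

As an `F[X]`-module with `X` acting by `φ`, the space `K` is cyclic, generated by `γ`, and isomorphic
to `F[X] / (X ^ n - 1)`. Hence the range of `p(φ)` is that of `g(φ)` for `g = gcd(p, X ^ n - 1)`,
and has dimension `deg ((X ^ n - 1) / g)` (`finrank_range_aeval`).
-/

open scoped BigOperators
open scoped Classical

open Polynomial in
theorem natDegree_X_pow_sub_one {F : Type*} [Field F] (n : ℕ) :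
    (X ^ n - 1 : F[X]).natDegree = n :=
  natDegree_X_pow_sub_C (r := (1 : F))

open Polynomial in
/-- If the orbit vectors `x, φ x, …, φ^(n-1) x` are independent and `φ ^ n = 1`, the annihilator
of the vector `x` in `F[X]` is generated by `X ^ n - 1`. -/
theorem dvd_of_aeval_cyclic_eq_zero {F V : Type*} [Field F] [AddCommGroup V] [Module F V]
    (φ : Module.End F V) (n : ℕ) (hn : n ≠ 0) (hφ : φ ^ n = 1) (x : V)
    (hli : LinearIndependent F fun i : Fin n => (φ ^ (i : ℕ)) x)
    (f : F[X]) (hf : aeval φ f x = 0) : X ^ n - 1 ∣ f := by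
  have hm : (X ^ n - 1 : F[X]).Monic := monic_X_pow_sub_C 1 hn
  rw [← modByMonic_eq_zero_iff_dvd hm]
  set r := f %ₘ (X ^ n - 1) with hr
  have h0 : aeval φ r x = 0 := by
    have h := modByMonic_add_div f (X ^ n - 1 : F[X])
    rw [← h] at hf
    simpa [hφ] using hf
  have hd : r.natDegree < n := by
    have := natDegree_modByMonic_lt f hm (by
      intro h
      have := congrArg natDegree h
      rw [natDegree_X_pow_sub_one, natDegree_one] at this
      exact hn this)
    rwa [natDegree_X_pow_sub_one] at this
  rw [aeval_eq_sum_range' hd, LinearMap.sum_apply, Finset.sum_range] at h0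
  have h1 := Fintype.linearIndependent_iff.1 hli (fun i => r.coeff i) (by simpa using h0)
  ext k
  by_cases hk : k < n
  · simpa using h1 ⟨k, hk⟩
  · rw [coeff_eq_zero_of_natDegree_lt (by omega), coeff_zero]

open Polynomial in
/-- Identifying the cyclic module with `F[X] / (g * h)`, the image of multiplication by `g` is a
copy of `F[X] / (h)`, represented by the polynomials of degree less than `deg h`. -/
theorem finrank_range_aeval_of_mul_eq {F V : Type*} [Field F] [AddCommGroup V] [Module F V]
    (φ : Module.End F V) (n : ℕ) (hn : n ≠ 0) (hφ : φ ^ n = 1) (x : V)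
    (hli : LinearIndependent F fun i : Fin n => (φ ^ (i : ℕ)) x)
    (hsp : Submodule.span F (Set.range fun i : Fin n => (φ ^ (i : ℕ)) x) = ⊤)
    (g h : F[X]) (hgh : X ^ n - 1 = g * h) :
    Module.finrank F (LinearMap.range (aeval φ g : Module.End F V)) = h.natDegree := by
  have hne : (X ^ n - 1 : F[X]) ≠ 0 := (monic_X_pow_sub_C 1 hn).ne_zero
  have hg : g ≠ 0 := by rintro rfl; simp [hgh] at hne
  have hh : h ≠ 0 := by rintro rfl; simp [hgh] at hne
  let Φ : F[X] →ₗ[F] V := (LinearMap.applyₗ x) ∘ₗ (aeval φ).toLinearMap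
  have hΦ : ∀ f, Φ f = aeval φ f x := fun f => rfl
  have hsurj : ∀ v, ∃ f, Φ f = v := by
    have : LinearMap.range Φ = ⊤ := by
      rw [eq_top_iff, ← hsp, Submodule.span_le]
      rintro _ ⟨i, rfl⟩
      exact ⟨X ^ (i : ℕ), by simp [hΦ]⟩
    exact LinearMap.range_eq_top.1 this
  let L : degreeLT F h.natDegree →ₗ[F] V := (aeval φ g : Module.End F V) ∘ₗ Φ ∘ₗ Submodule.subtype _
  have hL : ∀ f, L f = aeval φ (g * f.1) x := fun f => by simp [L, hΦ]
  have hinj : Function.Injective L := by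
    rw [injective_iff_map_eq_zero]
    rintro ⟨f, hf⟩ h0
    rw [hL] at h0
    have hdvd := dvd_of_aeval_cyclic_eq_zero φ n hn hφ x hli _ h0
    rw [hgh] at hdvd
    have := (mul_dvd_mul_iff_left hg).1 hdvd
    rw [mem_degreeLT, ← degree_eq_natDegree hh] at hf
    exact Subtype.ext (eq_zero_of_dvd_of_degree_lt this hf)
  have hrange : LinearMap.range (aeval φ g : Module.End F V) = LinearMap.range L := by
    apply le_antisymm
    · rintro _ ⟨v, rfl⟩
      obtain ⟨f, rfl⟩ := hsurj v
      refine ⟨⟨f % h, ?_⟩, ?_⟩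
      · rw [mem_degreeLT, ← degree_eq_natDegree hh]
        exact EuclideanDomain.mod_lt f hh
      · have e : g * f = g * (f % h) + (f / h) * (X ^ n - 1) := by
          rw [hgh]
          linear_combination (-g) * EuclideanDomain.div_add_mod f h
        rw [hL, hΦ, ← Module.End.mul_apply, ← map_mul, e]
        simp [hφ]
    · exact LinearMap.range_comp_le_range _ _
  rw [hrange, LinearMap.finrank_range_of_inj hinj, (degreeLTEquiv F h.natDegree).finrank_eq,
    Module.finrank_fin_fun]

open Polynomial in
/-- By Bézout, `p(φ)` and `gcd(p, X ^ n - 1)(φ)` have the same range. -/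
theorem finrank_range_aeval {F V : Type*} [Field F] [AddCommGroup V] [Module F V]
    (φ : Module.End F V) (n : ℕ) (hn : n ≠ 0) (hφ : φ ^ n = 1) (x : V)
    (hli : LinearIndependent F fun i : Fin n => (φ ^ (i : ℕ)) x)
    (hsp : Submodule.span F (Set.range fun i : Fin n => (φ ^ (i : ℕ)) x) = ⊤)
    (p : F[X]) :
    Module.finrank F (LinearMap.range (aeval φ p : Module.End F V)) =
      n - (EuclideanDomain.gcd p (X ^ n - 1)).natDegree := by
  have hne : (X ^ n - 1 : F[X]) ≠ 0 := (monic_X_pow_sub_C 1 hn).ne_zero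
  set g := EuclideanDomain.gcd p (X ^ n - 1) with hgdef
  obtain ⟨h, hgh⟩ : g ∣ X ^ n - 1 := EuclideanDomain.gcd_dvd_right _ _
  obtain ⟨k, hk⟩ : g ∣ p := EuclideanDomain.gcd_dvd_left _ _
  have hg : g ≠ 0 := by intro h'; simp [hgh, h'] at hne
  have hh : h ≠ 0 := by rintro rfl; simp [hgh] at hne
  have hr : LinearMap.range (aeval φ p : Module.End F V) = LinearMap.range (aeval φ g) := by
    apply le_antisymm
    · rw [hk, map_mul]
      exact LinearMap.range_comp_le_range _ _
    · have hb := EuclideanDomain.gcd_eq_gcd_ab p (X ^ n - 1)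
      rw [← hgdef] at hb
      have : (aeval φ g : Module.End F V) =
          aeval φ p * aeval φ (EuclideanDomain.gcdA p (X ^ n - 1)) := by
        rw [hb]; simp [hφ]
      rw [this]
      exact LinearMap.range_comp_le_range _ _
  have hdeg := congrArg natDegree hgh
  rw [natDegree_mul hg hh, natDegree_X_pow_sub_one] at hdeg
  rw [hr, finrank_range_aeval_of_mul_eq φ n hn hφ x hli hsp g h hgh]
  omega

/-- The generator of the basis dual to a normal basis: the trace form is nondegenerate and
Frobenius-invariant, so the dual basis is again a Frobenius orbit. -/
theorem exists_dual_normal_generator {F K : Type*} [Field F] [Fintype F] [Field K] [Algebra F K]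
    [FiniteDimensional F K] (n : ℕ) (hn : n = Module.finrank F K) (β : K)
    (hli : LinearIndependent F fun i : Fin n => β ^ Fintype.card F ^ (i : ℕ))
    (hsp : Submodule.span F (Set.range fun i : Fin n => β ^ Fintype.card F ^ (i : ℕ)) = ⊤) :
    ∃ γ : K, ∀ i j : Fin n,
      Algebra.trace F K (γ ^ Fintype.card F ^ (i : ℕ) * β ^ Fintype.card F ^ (j : ℕ)) =
        if i = j then 1 else 0 := by
  have : Finite K := Module.finite_of_finite F
  have hpos : 0 < n := hn ▸ Module.finrank_pos
  let b : Module.Basis (Fin n) F K := Module.Basis.mk hli hsp.ge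
  have hnd := traceForm_nondegenerate F K
  let γ := (Algebra.traceForm F K).dualBasis hnd b ⟨0, hpos⟩
  have hγ : ∀ j : Fin n, Algebra.trace F K (γ * β ^ Fintype.card F ^ (j : ℕ)) =
      if (j : ℕ) = 0 then 1 else 0 := by
    intro j
    have := LinearMap.BilinForm.apply_dualBasis_left hnd b ⟨0, hpos⟩ j
    rw [Algebra.traceForm_apply, Module.Basis.mk_apply] at this
    rw [this]
    simp [Fin.ext_iff]
  have hinv : ∀ (m : ℕ) (y : K),
      Algebra.trace F K (y ^ Fintype.card F ^ m) = Algebra.trace F K y := by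
    intro m y
    have := Algebra.trace_eq_of_algEquiv ((FiniteField.frobeniusAlgEquivOfAlgebraic F K) ^ m) y
    rwa [AlgEquiv.coe_pow, FiniteField.coe_frobeniusAlgEquivOfAlgebraic_iterate] at this
  have hβn : β ^ Fintype.card F ^ n = β := by
    have := Fintype.ofFinite K
    rw [hn, ← Module.card_eq_pow_finrank, FiniteField.pow_card]
  refine ⟨γ, fun i j => ?_⟩
  rcases le_or_gt i j with hij | hij
  · have e : γ ^ Fintype.card F ^ (i : ℕ) * β ^ Fintype.card F ^ (j : ℕ) =
        (γ * β ^ Fintype.card F ^ ((j : ℕ) - i)) ^ Fintype.card F ^ (i : ℕ) := by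
      rw [mul_pow, ← pow_mul, ← pow_add, Nat.sub_add_cancel hij]
    rw [e, hinv, hγ ⟨j - i, by omega⟩]
    congr 1
    simp only [Fin.ext_iff, eq_iff_iff]
    omega
  -- for `j < i`, shift the exponent of `β` up by `n`, using `β ^ q ^ n = β`
  · have e : γ ^ Fintype.card F ^ (i : ℕ) * β ^ Fintype.card F ^ (j : ℕ) =
        (γ * β ^ Fintype.card F ^ (n + (j : ℕ) - i)) ^ Fintype.card F ^ (i : ℕ) := by
      rw [mul_pow, ← pow_mul, ← pow_add, Nat.sub_add_cancel (by omega), pow_add, pow_mul, hβn]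
    rw [e, hinv, hγ ⟨n + j - i, by omega⟩]
    congr 1
    simp only [Fin.ext_iff, eq_iff_iff]
    omega

/-- Let `β` generate a normal basis of `K` over `F`, let `α ∈ K`, and let
`p(X) = ∑ tr(α β^(qⁱ)) Xⁱ ∈ F[X]`. Then
`dim_F span{α, α^q, …, α^(q^(n-1))} = n - deg gcd(p(X), Xⁿ - 1)`. -/
theorem stmt19 (F K : Type*) [Field F] [Fintype F] [Field K] [Algebra F K]
    [FiniteDimensional F K] (q n : ℕ) (hq : q = Fintype.card F)
    (hn : n = Module.finrank F K) (β : K)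
    (hβli : LinearIndependent F fun i : Fin n => β ^ q ^ (i : ℕ))
    (hβsp : Submodule.span F (Set.range fun i : Fin n => β ^ q ^ (i : ℕ)) = ⊤)
    (α : K) (p : Polynomial F)
    (hp : p = ∑ i : Fin n,
      Polynomial.C (Algebra.trace F K (α * β ^ q ^ (i : ℕ))) * Polynomial.X ^ (i : ℕ)) :
    Module.finrank F (Submodule.span F (Set.range fun i : Fin n => α ^ q ^ (i : ℕ))) =
      n - (EuclideanDomain.gcd p (Polynomial.X ^ n - 1)).natDegree := by
  subst hq
  have hn0 : n ≠ 0 := by rw [hn]; exact Module.finrank_pos.ne'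
  have : Finite K := Module.finite_of_finite F
  have := Fintype.ofFinite K
  obtain ⟨γ, hγ⟩ := exists_dual_normal_generator n hn β hβli hβsp
  set q := Fintype.card F
  let φ : Module.End F K := (FiniteField.frobeniusAlgHom F K).toLinearMap
  have hφi : ∀ (i : ℕ) (x : K), (φ ^ i) x = x ^ q ^ i := by
    intro i x
    induction i with
    | zero => simp
    | succ k ih =>
      rw [pow_succ', Module.End.mul_apply, ih, pow_succ, pow_mul]
      rfl
  have hφn : φ ^ n = 1 := by
    ext x
    rw [hφi, hn, ← Module.card_eq_pow_finrank, FiniteField.pow_card]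
    rfl
  have htr : ∀ (c : Fin n → F) (j : Fin n),
      Algebra.trace F K ((∑ i, c i • γ ^ q ^ (i : ℕ)) * β ^ q ^ (j : ℕ)) = c j := by
    intro c j
    rw [Finset.sum_mul, map_sum]
    simp only [smul_mul_assoc, map_smul, hγ]
    simp
  have hγli : LinearIndependent F fun i : Fin n => (φ ^ (i : ℕ)) γ := by
    simp only [hφi]
    rw [Fintype.linearIndependent_iff]
    intro c hc j
    rw [← htr c j, hc]
    simp
  have hγsp : Submodule.span F (Set.range fun i : Fin n => (φ ^ (i : ℕ)) γ) = ⊤ := by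
    refine hγli.span_eq_top_of_card_eq_finrank' ?_
    simpa using hn
  have hpγ : Polynomial.aeval φ p γ = α := by
    have e : Polynomial.aeval φ p γ =
        ∑ i : Fin n, Algebra.trace F K (α * β ^ q ^ (i : ℕ)) • γ ^ q ^ (i : ℕ) := by
      rw [hp, map_sum, LinearMap.sum_apply]
      refine Finset.sum_congr rfl fun i _ => ?_
      simp [hφi, Polynomial.aeval_C, Module.algebraMap_end_apply]
    -- both sides have the same traces against the spanning family `β ^ q ^ j`
    have hext : Algebra.traceForm F K (Polynomial.aeval φ p γ) = Algebra.traceForm F K α := by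
      refine LinearMap.ext_on_range hβsp fun j => ?_
      rw [Algebra.traceForm_apply, Algebra.traceForm_apply, e, htr]
    exact LinearMap.ker_eq_bot.1 (traceForm_nondegenerate F K).ker_eq_bot hext
  have hspan : Submodule.span F (Set.range fun i : Fin n => α ^ q ^ (i : ℕ)) =
      LinearMap.range (Polynomial.aeval φ p : Module.End F K) := by
    rw [LinearMap.range_eq_map, ← hγsp, Submodule.map_span, ← Set.range_comp]
    congr 2
    funext i
    have hc : Commute (Polynomial.aeval φ p) (φ ^ (i : ℕ)) := by
      have := Polynomial.aeval_X_pow (R := F) φ (n := (i : ℕ))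
      rw [← this]
      exact (Commute.all p _).map (Polynomial.aeval φ)
    rw [← hφi, ← hpγ, ← Module.End.mul_apply, ← hc.eq]
    rfl
  rw [hspan]
  exact finrank_range_aeval φ n hn0 hφn γ hγli hγsp p
end
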